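/- Let φ be a CNF formula over variables x_1,…,x_k (k ≥ 1) with clauses C_1,…,C_ℓ, let c > 4 be a real number, and let q ≥ 1 be an integer. Let (V,dist) be a metric space containing pairwise distinct points t_1,…,t_k, u_1,…,u_k, f_1,…,f_k, v_1,…,v_ℓ, and set F = {t_1,f_1,…,t_k,f_k}. Assume: (i) for every variable index x, dist(u_x,t_x) = dist(u_x,f_x) = 1, and for every g ∈ F with g ∉ {t_x,f_x}, dist(u_x,g) ≥ 1 + 22c; (ii) for every clause index i, dist(v_i,g) = (11c)^i for every literal facility g of C_i, and for every g ∈ F, dist(v_i,g) ≥ (11c)^i with equality only if g is a literal facility of C_i. Then φ is satisfiable if and only if there exists a nonempty S ⊆ F with |S| + Σ_{x=1}^{k} dist(u_x,S)^q + Σ_{i=1}^{ℓ} dist(v_i,S)^q ≤ 2k + Σ_{i=1}^{ℓ} (11c)^{iq}. -/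

import Mathlib

/-!
Every variable must be paid for with at least `2`: if no facility of `x` is open, then `u x` is at
distance at least `2` from `S`; otherwise at least one facility and a connection of length at
least `1` are paid. Every clause pays at least the `q`-th power of its radius. The budget is exactly
the sum of these lower bounds, so a solution within the budget attains each of them. Tightness at
`x` means that `t x` and `f x` are not both open, hence the open facilities define an assignment;
tightness at a clause means that one of its literal facilities is open, i.e. that its literal is
true.
-/

open Finset Function

section ConnectionCost

variable {V ι : Type*} [PseudoMetricSpace V] {S : Finset V}

/-- The distance `dist(w, S)` from a point to a nonempty finite set, as a minimum over `S`. -/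
def distTo (hS : S.Nonempty) (w : V) : ℝ :=
  S.inf' hS fun g => dist w g

theorem distTo_le_dist (hS : S.Nonempty) (w : V) {g : V} (hg : g ∈ S) : distTo hS w ≤ dist w g :=
  inf'_le _ hg

theorem le_distTo {hS : S.Nonempty} {w : V} {a : ℝ} (h : ∀ g ∈ S, a ≤ dist w g) :
    a ≤ distTo hS w :=
  le_inf' _ _ h

theorem distTo_nonneg (hS : S.Nonempty) (w : V) : 0 ≤ distTo hS w :=
  le_distTo fun _ _ => dist_nonneg

theorem exists_mem_distTo_eq_dist (hS : S.Nonempty) (w : V) : ∃ g ∈ S, distTo hS w = dist w g :=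
  exists_mem_eq_inf' hS _

variable [Fintype ι]

/-- The total cost of connecting the clients `w j` to the open facilities `S`, each client paying
the `q`-th power of its distance. -/
def connectionCost (q : ℕ) (hS : S.Nonempty) (w : ι → V) : ℝ :=
  ∑ j, distTo hS (w j) ^ q

variable {q : ℕ} {hS : S.Nonempty} {w : ι → V} {r : ι → ℝ}

theorem connectionCost_le_sum_pow (h : ∀ j, ∃ g ∈ S, dist (w j) g ≤ r j) :
    connectionCost q hS w ≤ ∑ j, r j ^ q := by
  refine sum_le_sum fun j _ => pow_le_pow_left₀ (distTo_nonneg hS _) ?_ q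
  obtain ⟨g, hg, hgr⟩ := h j
  exact (distTo_le_dist hS _ hg).trans hgr

theorem sum_pow_le_connectionCost (hr : ∀ j, 0 ≤ r j) (h : ∀ j, ∀ g ∈ S, r j ≤ dist (w j) g) :
    ∑ j, r j ^ q ≤ connectionCost q hS w :=
  sum_le_sum fun j _ => pow_le_pow_left₀ (hr j) (le_distTo (h j)) q

theorem exists_mem_dist_eq_of_connectionCost_le (hq : q ≠ 0) (hr : ∀ j, 0 ≤ r j)
    (h : ∀ j, ∀ g ∈ S, r j ≤ dist (w j) g) (hle : connectionCost q hS w ≤ ∑ j, r j ^ q) (j : ι) :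
    ∃ g ∈ S, dist (w j) g = r j := by
  have pow_le : ∀ j ∈ univ, r j ^ q ≤ distTo hS (w j) ^ q :=
    fun j _ => pow_le_pow_left₀ (hr j) (le_distTo (h j)) q
  have pow_eq : r j ^ q = distTo hS (w j) ^ q :=
    (sum_eq_sum_iff_of_le pow_le).1 ((sum_pow_le_connectionCost hr h).antisymm hle) j (mem_univ j)
  obtain ⟨g, hg, hdist⟩ := exists_mem_distTo_eq_dist hS (w j)
  exact ⟨g, hg, hdist ▸ ((pow_left_inj₀ (hr j) (distTo_nonneg hS _) hq).1 pow_eq).symm⟩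

end ConnectionCost

theorem sum_card_filter_mem_le_card {X β V : Type*} [Fintype X] [Fintype β] [DecidableEq V]
    {lit : X × β → V} (hlit : Injective lit) (S : Finset V) :
    ∑ x, #{b | lit (x, b) ∈ S} ≤ #S :=
  calc ∑ x, #{b | lit (x, b) ∈ S}
      = #{p | lit p ∈ S} := by simp only [card_filter, Fintype.sum_prod_type]
    _ ≤ #S := card_le_card_of_injOn lit (fun p hp => by simpa using hp) hlit.injOn

/-- The metric hypotheses of the reduction from SAT. A literal is a variable with a polarity,
`lit p` is the facility of the literal `p`, and `u x` and `v i` are the clients of the variable `x`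
and of the clause `C i`, the latter with radius `r i`. -/
structure IsSatReduction {V X I : Type*} [PseudoMetricSpace V] (C : I → Finset (X × Bool))
    (lit : X × Bool → V) (u : X → V) (v : I → V) (r : I → ℝ) : Prop where
  lit_injective : Injective lit
  radius_nonneg : ∀ i, 0 ≤ r i
  dist_variable : ∀ x b, dist (u x) (lit (x, b)) = 1
  two_le_dist_variable : ∀ x p, p.1 ≠ x → 2 ≤ dist (u x) (lit p)
  dist_clause : ∀ i, ∀ p ∈ C i, dist (v i) (lit p) = r i
  radius_lt_dist_clause : ∀ i, ∀ p ∉ C i, r i < dist (v i) (lit p)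

namespace IsSatReduction

variable {V X I : Type*} [PseudoMetricSpace V] [DecidableEq V] [Fintype X]
  {C : I → Finset (X × Bool)} {lit : X × Bool → V} {u : X → V} {v : I → V} {r : I → ℝ}
  {q : ℕ} {S : Finset V} {hS : S.Nonempty}

theorem one_le_distTo_variable (h : IsSatReduction C lit u v r) (hSF : S ⊆ univ.image lit)
    (x : X) : 1 ≤ distTo hS (u x) := by
  refine le_distTo fun g hg => ?_
  obtain ⟨⟨y, b⟩, -, rfl⟩ := mem_image.1 (hSF hg)
  obtain rfl | hyx := eq_or_ne y x
  · exact (h.dist_variable y b).ge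
  · exact one_le_two.trans (h.two_le_dist_variable x _ hyx)

theorem two_le_distTo_variable (h : IsSatReduction C lit u v r) (hSF : S ⊆ univ.image lit)
    {x : X} (hx : ∀ b, lit (x, b) ∉ S) : 2 ≤ distTo hS (u x) := by
  refine le_distTo fun g hg => ?_
  obtain ⟨⟨y, b⟩, -, rfl⟩ := mem_image.1 (hSF hg)
  exact h.two_le_dist_variable x _ fun hyx : y = x => hx b (hyx ▸ hg)

theorem two_le_card_add_distTo_variable_pow (h : IsSatReduction C lit u v r) (hq : q ≠ 0)
    (hSF : S ⊆ univ.image lit) (x : X) :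
    (2 : ℝ) ≤ #{b | lit (x, b) ∈ S} + distTo hS (u x) ^ q := by
  have one_le := h.one_le_distTo_variable (hS := hS) hSF x
  obtain hclosed | hopen := ({b | lit (x, b) ∈ S} : Finset Bool).eq_empty_or_nonempty
  · have two_le : 2 ≤ distTo hS (u x) :=
      h.two_le_distTo_variable hSF fun b => filter_eq_empty_iff.1 hclosed (mem_univ b)
    simpa only [hclosed, card_empty, Nat.cast_zero, zero_add] using
      two_le.trans (le_self_pow₀ one_le hq)
  · have one_le_card : (1 : ℝ) ≤ #{b | lit (x, b) ∈ S} := mod_cast hopen.card_pos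
    linarith [one_le_pow₀ one_le (n := q)]

theorem two_mul_card_le_sum_card_add (h : IsSatReduction C lit u v r) (hq : q ≠ 0)
    (hSF : S ⊆ univ.image lit) :
    2 * (Fintype.card X : ℝ) ≤ ∑ x, ((#{b | lit (x, b) ∈ S} : ℝ) + distTo hS (u x) ^ q) := by
  simpa [mul_comm] using sum_le_sum fun x (_ : x ∈ univ) =>
    h.two_le_card_add_distTo_variable_pow (hS := hS) hq hSF x

theorem sum_card_add_le (h : IsSatReduction C lit u v r) :
    ∑ x, ((#{b | lit (x, b) ∈ S} : ℝ) + distTo hS (u x) ^ q) ≤ #S + connectionCost q hS u := by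
  rw [sum_add_distrib, connectionCost]
  gcongr
  exact_mod_cast sum_card_filter_mem_le_card h.lit_injective S

theorem eq_of_lit_mem (h : IsSatReduction C lit u v r) (hq : q ≠ 0) (hSF : S ⊆ univ.image lit)
    (hle : #S + connectionCost q hS u ≤ 2 * (Fintype.card X : ℝ)) {x : X} {a b : Bool}
    (ha : lit (x, a) ∈ S) (hb : lit (x, b) ∈ S) : a = b := by
  have tight : (2 : ℝ) = #{b | lit (x, b) ∈ S} + distTo hS (u x) ^ q := by
    refine (sum_eq_sum_iff_of_le fun y _ => h.two_le_card_add_distTo_variable_pow hq hSF y).1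
      (le_antisymm ?_ ?_) x (mem_univ x)
    · simpa [mul_comm] using h.two_mul_card_le_sum_card_add hq hSF
    · simpa [mul_comm] using h.sum_card_add_le.trans hle
  have one_le_pow : 1 ≤ distTo hS (u x) ^ q := one_le_pow₀ (h.one_le_distTo_variable hSF x)
  have card_le_one : #{b | lit (x, b) ∈ S} ≤ 1 := by
    have : (#{b | lit (x, b) ∈ S} : ℝ) ≤ 1 := by linarith
    exact_mod_cast this
  exact card_le_one_iff.1 card_le_one (by simpa using ha) (by simpa using hb)

theorem radius_le_dist_clause (h : IsSatReduction C lit u v r) (hSF : S ⊆ univ.image lit)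
    (i : I) : ∀ g ∈ S, r i ≤ dist (v i) g := by
  intro g hg
  obtain ⟨p, -, rfl⟩ := mem_image.1 (hSF hg)
  by_cases hp : p ∈ C i
  · exact (h.dist_clause i p hp).ge
  · exact (h.radius_lt_dist_clause i p hp).le

theorem exists_lit_mem_of_connectionCost_le [Fintype I] (h : IsSatReduction C lit u v r)
    (hq : q ≠ 0) (hSF : S ⊆ univ.image lit) (hle : connectionCost q hS v ≤ ∑ i, r i ^ q) (i : I) :
    ∃ p ∈ C i, lit p ∈ S := by
  obtain ⟨g, hg, hdist⟩ := exists_mem_dist_eq_of_connectionCost_le hq h.radius_nonneg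
    (h.radius_le_dist_clause hSF) hle i
  obtain ⟨p, -, rfl⟩ := mem_image.1 (hSF hg)
  exact ⟨p, by_contra fun hp => (h.radius_lt_dist_clause i p hp).ne' hdist, hg⟩

theorem exists_satisfying_of_cost_le [Fintype I] (h : IsSatReduction C lit u v r) (hq : q ≠ 0)
    (hSF : S ⊆ univ.image lit)
    (hle : #S + connectionCost q hS u + connectionCost q hS v ≤
      2 * (Fintype.card X : ℝ) + ∑ i, r i ^ q) :
    ∃ α : X → Bool, ∀ i, ∃ p ∈ C i, α p.1 = p.2 := by
  have variables_ge : 2 * (Fintype.card X : ℝ) ≤ #S + connectionCost q hS u :=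
    (h.two_mul_card_le_sum_card_add hq hSF).trans h.sum_card_add_le
  have clauses_ge : ∑ i, r i ^ q ≤ connectionCost q hS v :=
    sum_pow_le_connectionCost h.radius_nonneg (h.radius_le_dist_clause hSF)
  refine ⟨fun x => decide (lit (x, true) ∈ S), fun i => ?_⟩
  obtain ⟨⟨x, b⟩, hp, hb⟩ := h.exists_lit_mem_of_connectionCost_le hq hSF (by linarith) i
  have consistent : ∀ a, lit (x, a) ∈ S → a = b :=
    fun a ha => h.eq_of_lit_mem hq hSF (by linarith) ha hb
  refine ⟨(x, b), hp, ?_⟩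
  cases b
  · exact decide_eq_false fun ht => Bool.noConfusion (consistent true ht)
  · exact decide_eq_true hb

theorem exists_cost_le_of_satisfying [Fintype I] [Nonempty X] (h : IsSatReduction C lit u v r)
    {α : X → Bool} (hα : ∀ i, ∃ p ∈ C i, α p.1 = p.2) :
    ∃ S : Finset V, ∃ hS : S.Nonempty, S ⊆ univ.image lit ∧
      #S + connectionCost q hS u + connectionCost q hS v ≤
        2 * (Fintype.card X : ℝ) + ∑ i, r i ^ q := by
  let trueFacility (x : X) : V := lit (x, α x)
  have mem_true (x : X) : trueFacility x ∈ univ.image trueFacility :=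
    mem_image_of_mem _ (mem_univ x)
  refine ⟨univ.image trueFacility, univ_nonempty.image _,
    image_subset_iff.2 fun x _ => mem_image_of_mem lit (mem_univ (x, α x)), ?_⟩
  have card_le : (#(univ.image trueFacility) : ℝ) ≤ Fintype.card X := mod_cast card_image_le
  have variables_le :
      connectionCost q (univ_nonempty.image trueFacility) u ≤ ∑ _x : X, (1 : ℝ) ^ q :=
    connectionCost_le_sum_pow fun x => ⟨_, mem_true x, (h.dist_variable x (α x)).le⟩
  have clauses_le : connectionCost q (univ_nonempty.image trueFacility) v ≤ ∑ i, r i ^ q := by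
    refine connectionCost_le_sum_pow fun i => ?_
    obtain ⟨p, hp, hαp⟩ := hα i
    have lit_eq : trueFacility p.1 = lit p := congrArg (fun b => lit (p.1, b)) hαp
    exact ⟨_, mem_true p.1, lit_eq ▸ (h.dist_clause i p hp).le⟩
  simp only [one_pow, sum_const, card_univ, nsmul_eq_mul, mul_one] at variables_le
  linarith

end IsSatReduction

theorem sat_reduction_facilityLocation_general {V X I : Type*} [PseudoMetricSpace V]
    [DecidableEq V] [Fintype X] [Nonempty X] [Fintype I] {C : I → Finset (X × Bool)}
    {lit : X × Bool → V} {u : X → V} {v : I → V} {r : I → ℝ} {q : ℕ}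
    (h : IsSatReduction C lit u v r) (hq : q ≠ 0) :
    (∃ α : X → Bool, ∀ i, ∃ p ∈ C i, α p.1 = p.2) ↔
    ∃ S : Finset V, ∃ hS : S.Nonempty, S ⊆ univ.image lit ∧
      #S + connectionCost q hS u + connectionCost q hS v ≤
        2 * (Fintype.card X : ℝ) + ∑ i, r i ^ q :=
  ⟨fun ⟨_, hα⟩ => h.exists_cost_le_of_satisfying hα,
    fun ⟨_, _, hSF, hle⟩ => h.exists_satisfying_of_cost_le hq hSF hle⟩

section LiteralFacility

variable {V X : Type*} {t f : X → V}

/-- The facility of a literal: `t x` for the positive and `f x` for the negative literal on `x`. -/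
def literalFacility (t f : X → V) (p : X × Bool) : V :=
  bif p.2 then t p.1 else f p.1

theorem eq_literalFacility_iff {g : V} {p : X × Bool} :
    g = literalFacility t f p ↔ (p.2 = true ∧ g = t p.1) ∨ (p.2 = false ∧ g = f p.1) := by
  obtain ⟨x, _ | _⟩ := p <;> simp [literalFacility]

theorem image_literalFacility [Fintype X] [DecidableEq V] :
    univ.image (literalFacility t f) = univ.image t ∪ univ.image f := by
  ext g
  simp [literalFacility, or_comm, exists_or]

theorem literalFacility_injective (htf : Injective (Sum.elim t f)) :
    Injective (literalFacility t f) := by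
  rintro ⟨x, _ | _⟩ ⟨y, _ | _⟩ hxy
  · simpa using @htf (.inr x) (.inr y) hxy
  · simpa using @htf (.inr x) (.inl y) hxy
  · simpa using @htf (.inl x) (.inr y) hxy
  · simpa using @htf (.inl x) (.inl y) hxy

theorem isSatReduction_literalFacility {I : Type*} [PseudoMetricSpace V] [DecidableEq V]
    [Fintype X] {C : I → Finset (X × Bool)} {u : X → V} {v : I → V} {r : I → ℝ}
    (htf : Injective (Sum.elim t f)) (hr : ∀ i, 0 ≤ r i)
    (hu : ∀ x, dist (u x) (t x) = 1 ∧ dist (u x) (f x) = 1 ∧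
      ∀ g ∈ univ.image (literalFacility t f), g ≠ t x → g ≠ f x → 2 ≤ dist (u x) g)
    (hv : ∀ i, (∀ g, (∃ p ∈ C i, g = literalFacility t f p) → dist (v i) g = r i) ∧
      ∀ g ∈ univ.image (literalFacility t f), r i ≤ dist (v i) g ∧
        (dist (v i) g = r i → ∃ p ∈ C i, g = literalFacility t f p)) :
    IsSatReduction C (literalFacility t f) u v r := by
  have hlit := literalFacility_injective htf
  have lit_mem (p) : literalFacility t f p ∈ univ.image (literalFacility t f) :=
    mem_image_of_mem _ (mem_univ p)
  refine ⟨hlit, hr, ?_, fun x p hpx => ?_, fun i p hp => (hv i).1 _ ⟨p, hp, rfl⟩, fun i p hp => ?_⟩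
  · rintro x (_ | _)
    exacts [(hu x).2.1, (hu x).1]
  · refine (hu x).2.2 _ (lit_mem p) (fun hpt => hpx ?_) (fun hpf => hpx ?_)
    · exact congrArg Prod.fst (@hlit p (x, true) hpt)
    · exact congrArg Prod.fst (@hlit p (x, false) hpf)
  · obtain ⟨hle, hmem⟩ := (hv i).2 _ (lit_mem p)
    refine hle.lt_of_ne' fun hdist => hp ?_
    obtain ⟨p', hp', hpp'⟩ := hmem hdist
    exact hlit hpp' ▸ hp'

end LiteralFacility

/-- correctness of the SAT reduction for uniform Facility Location^q. -/
theorem sat_reduction_facilityLocation {V : Type*} [MetricSpace V] [DecidableEq V]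
    (k ℓ : ℕ) (hk : 1 ≤ k) (C : Fin ℓ → Finset (Fin k × Bool))
    (c : ℝ) (hc : 4 < c) (q : ℕ) (hq : 1 ≤ q)
    (t u f : Fin k → V) (v : Fin ℓ → V)
    (hinj : Function.Injective (fun z : (Fin k ⊕ Fin k ⊕ Fin k) ⊕ Fin ℓ =>
      match z with
      | .inl (.inl x) => t x
      | .inl (.inr (.inl x)) => u x
      | .inl (.inr (.inr x)) => f x
      | .inr i => v i))
    (F : Finset V) (hF : F = Finset.image t Finset.univ ∪ Finset.image f Finset.univ)
    (hi : ∀ x : Fin k, dist (u x) (t x) = 1 ∧ dist (u x) (f x) = 1 ∧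
      ∀ g ∈ F, g ≠ t x → g ≠ f x → 1 + 22 * c ≤ dist (u x) g)
    (hii : ∀ i : Fin ℓ,
      (∀ g : V, (∃ p ∈ C i, (p.2 = true ∧ g = t p.1) ∨ (p.2 = false ∧ g = f p.1)) →
        dist (v i) g = (11 * c) ^ (i.1 + 1)) ∧
      ∀ g ∈ F, (11 * c) ^ (i.1 + 1) ≤ dist (v i) g ∧
        (dist (v i) g = (11 * c) ^ (i.1 + 1) →
          ∃ p ∈ C i, (p.2 = true ∧ g = t p.1) ∨ (p.2 = false ∧ g = f p.1))) :
    (∃ α : Fin k → Bool, ∀ i : Fin ℓ, ∃ p ∈ C i, α p.1 = p.2) ↔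
    (∃ S : Finset V, ∃ hS : S.Nonempty, S ⊆ F ∧
      (S.card : ℝ) +
      (∑ x : Fin k, (S.inf' hS fun g => dist (u x) g) ^ q) +
      (∑ i : Fin ℓ, (S.inf' hS fun g => dist (v i) g) ^ q) ≤
        2 * (k : ℝ) + ∑ i : Fin ℓ, ((11 * c) ^ (i.1 + 1)) ^ q) := by
  have htf : Injective (Sum.elim t f) := by
    rintro (x | x) (y | y) hxy
    · simpa using @hinj (.inl (.inl x)) (.inl (.inl y)) hxy
    · simpa using @hinj (.inl (.inl x)) (.inl (.inr (.inr y))) hxy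
    · simpa using @hinj (.inl (.inr (.inr x))) (.inl (.inl y)) hxy
    · simpa using @hinj (.inl (.inr (.inr x))) (.inl (.inr (.inr y))) hxy
  have : Nonempty (Fin k) := Fin.pos_iff_nonempty.1 hk
  obtain rfl := hF.trans image_literalFacility.symm
  simp only [← eq_literalFacility_iff] at hii
  have reduction : IsSatReduction C (literalFacility t f) u v fun i => (11 * c) ^ (i.1 + 1) :=
    isSatReduction_literalFacility htf (fun i => by positivity)
      (fun x => ⟨(hi x).1, (hi x).2.1, fun g hg hgt hgf =>
        (by linarith : (2 : ℝ) ≤ 1 + 22 * c).trans ((hi x).2.2 g hg hgt hgf)⟩) hii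
  simpa only [Fintype.card_fin, connectionCost, distTo] using
    sat_reduction_facilityLocation_general reduction (Nat.one_le_iff_ne_zero.1 hq)
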